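/- arXiv:1809.09158 — 3 statements merged into one kernel-verified Lean document; each statement's English description precedes it below -/
import Mathlib

section
/- Let (H₁,…,H_k) be a valid hook configuration of a word w = w₁⋯w_m. If the points (i, w_i) and (j, w_j) are given the same color in the coloring of the plot of w induced by the configuration and i < j, then w_i < w_j. -/
/-- The `i`-th entry (1-indexed) of the word `w`, i.e. the height of the point
`(i, w_i)` of the plot of `w`. -/
def entry (w : List ℕ) (i : ℕ) : ℕ := w.getD (i - 1) 0

/-- A hook of `w`: a pair of points `(i, w_i)` (the southwest endpoint) and
`(j, w_j)` (the northeast endpoint) of the plot of `w` with `i < j` and `w_i ≤ w_j`.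
We record a hook as the pair `(i, j)` of indices (1-indexed). -/
def IsHook (w : List ℕ) (h : ℕ × ℕ) : Prop :=
  1 ≤ h.1 ∧ h.1 < h.2 ∧ h.2 ≤ w.length ∧ entry w h.1 ≤ entry w h.2

/-- `d` is a descent of `w`: `1 ≤ d ≤ m - 1` and `w_d ≥ w_{d+1}`. -/
def IsDescent (w : List ℕ) (d : ℕ) : Prop :=
  1 ≤ d ∧ d + 1 ≤ w.length ∧ entry w (d + 1) ≤ entry w d

/-- `H = (H₁, …, H_k)` is a valid hook configuration of `w`:
(1) the southwest endpoints have strictly increasing indices `i₁ < ⋯ < i_k`;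
(2) each descent top of `w` is the southwest endpoint of a hook;
(3) each point that is the northeast endpoint of a hook is the northeast endpoint
of a descent hook and also of a small hook;
(4) the open intervals `(i_u, j_u)` are pairwise disjoint or nested. -/
def IsVHC (w : List ℕ) (H : List (ℕ × ℕ)) : Prop :=
  (∀ h ∈ H, IsHook w h) ∧
  (H.map Prod.fst).Pairwise (· < ·) ∧
  (∀ d : ℕ, IsDescent w d → ∃ h ∈ H, h.1 = d) ∧
  (∀ j : ℕ, (∃ h ∈ H, h.2 = j) →
      (∃ h ∈ H, h.2 = j ∧ IsDescent w h.1) ∧ (∃ h ∈ H, h.2 = j ∧ h.2 = h.1 + 1)) ∧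
  (∀ h ∈ H, ∀ h' ∈ H,
      (Set.Ioo h.1 h.2 : Set ℕ) ∩ Set.Ioo h'.1 h'.2 = ∅ ∨
      (Set.Ioo h.1 h.2 : Set ℕ) ⊆ Set.Ioo h'.1 h'.2 ∨
      (Set.Ioo h'.1 h'.2 : Set ℕ) ⊆ Set.Ioo h.1 h.2)

/-- The point `(a, w_a)` "sees" the hook `h` when it looks up: either `(a, w_a)`
lies strictly below `h`, or `(a, w_a)` is the northeast endpoint of `h`. -/
def seesHook (w : List ℕ) (h : ℕ × ℕ) (a : ℕ) : Prop :=
  (h.1 < a ∧ a < h.2 ∧ entry w a ≤ entry w h.2) ∨ a = h.2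

instance (w : List ℕ) (h : ℕ × ℕ) (a : ℕ) : Decidable (seesHook w h a) := by
  unfold seesHook; infer_instance

/-- The color that the point `(a, w_a)` receives in the coloring induced by the
configuration `H = (H₁, …, H_k)` (indices of hooks are 1-based): among all hooks
that the point sees, it receives the color of the one whose southwest endpoint is
rightmost (for a valid hook configuration, this is the hook with the largest index,
since `i₁ < ⋯ < i_k`); if it sees no hook, it receives the color `0` (blue). -/
def colorOf (w : List ℕ) (H : List (ℕ × ℕ)) (a : ℕ) : ℕ :=
  ((Finset.range H.length).filter fun u => seesHook w (H.getD u (0, 0)) a).sup (· + 1)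

/-- `C_{q^H} = C_{q₀} C_{q₁} ⋯ C_{q_k}`, where `q^H = (q₀, …, q_k)` is the
composition induced by the configuration `H = (H₁, …, H_k)` of `w`: `q_t` is the
number of points of the plot of `w` colored `t` in the induced coloring, and
`C_n` is the `n`-th Catalan number. -/
def CatComp (w : List ℕ) (H : List (ℕ × ℕ)) : ℕ :=
  ∏ t ∈ Finset.range (H.length + 1),
    catalan (((Finset.Icc 1 w.length).filter fun a => colorOf w H a = t).card)

/-- `H` is a binary valid hook configuration: each point is the northeast endpoint
of at most two hooks. -/
def IsBinaryVHC (w : List ℕ) (H : List (ℕ × ℕ)) : Prop :=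
  IsVHC w H ∧ ∀ j : ℕ, (H.countP fun h => h.2 == j) ≤ 2

/-- `H_R(w)`: the set of binary valid hook configurations of `w` in which every
horizontal hook is small. -/
def HR (w : List ℕ) : Set (List (ℕ × ℕ)) :=
  {H | IsBinaryVHC w H ∧ ∀ h ∈ H, entry w h.1 = entry w h.2 → h.2 = h.1 + 1}

/-- `H_L(w)`: the set of binary valid hook configurations of `w` in which no small
horizontal hook has the same northeast endpoint as another hook. -/
def HL (w : List ℕ) : Set (List (ℕ × ℕ)) :=
  {H | IsBinaryVHC w H ∧ ∀ h ∈ H, h.2 = h.1 + 1 → entry w h.1 = entry w h.2 →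
      ∀ h' ∈ H, h' ≠ h → h'.2 ≠ h.2}

/-! The point of the proof is that two points `i < j` with `w_j ≤ w_i` have colors in strictly
increasing order, because `j` sees a hook starting at or after `i`, whereas `i` only sees hooks
starting before it, and hooks are numbered by their southwest endpoints. If `j` is a northeast
endpoint, such a hook is the small hook ending at `j`. Otherwise, let `d` be the last index in
`[i, j)` with `w_j ≤ w_d`. It is a descent, and the hook starting at `d` reaches height at least
`w_j`, so by the choice of `d` it can only end beyond `j`, and `j` lies below it. -/

theorem exists_mem_Ico_forall_Ioo_lt {ι α : Type*} [Preorder ι] [LocallyFiniteOrder ι]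
    [LinearOrder α] {f : ι → α} {i j : ι} (hij : i < j) (hle : f j ≤ f i) :
    ∃ d ∈ Set.Ico i j, f j ≤ f d ∧ ∀ e ∈ Set.Ioo d j, f e < f j := by
  obtain ⟨d, hd, hmax⟩ := ({d ∈ Finset.Ico i j | f j ≤ f d} : Finset ι).exists_maximal
    ⟨i, Finset.mem_filter.2 ⟨Finset.left_mem_Ico.2 hij, hle⟩⟩
  obtain ⟨hdij, hjd⟩ := Finset.mem_filter.1 hd
  rw [Finset.mem_Ico] at hdij
  refine ⟨d, hdij, hjd, fun e ⟨hde, hej⟩ => lt_of_not_ge fun hje => ?_⟩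
  have he : e ∈ ({d ∈ Finset.Ico i j | f j ≤ f d} : Finset ι) :=
    Finset.mem_filter.2 ⟨Finset.mem_Ico.2 ⟨hdij.1.trans hde.le, hej⟩, hje⟩
  exact hde.not_ge (hmax he hde.le)

section

variable {w : List ℕ} {H : List (ℕ × ℕ)} {i j : ℕ}

theorem exists_isDescent_forall_Ioo_lt (hi : 1 ≤ i) (hij : i < j) (hj : j ≤ w.length)
    (hle : entry w j ≤ entry w i) :
    ∃ d ∈ Set.Ico i j, IsDescent w d ∧ entry w j ≤ entry w d ∧
      ∀ e ∈ Set.Ioo d j, entry w e < entry w j := by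
  obtain ⟨d, ⟨hid, hdj⟩, hjd, hlt⟩ := exists_mem_Ico_forall_Ioo_lt hij hle
  have hsucc : entry w (d + 1) ≤ entry w j := by
    obtain rfl | hdj' := (Nat.succ_le_of_lt hdj).eq_or_lt
    · exact le_rfl
    · exact (hlt (d + 1) ⟨d.lt_succ_self, hdj'⟩).le
  exact ⟨d, ⟨hid, hdj⟩, ⟨hi.trans hid, hdj.trans_le hj, hsucc.trans hjd⟩, hjd, hlt⟩

theorem exists_seesHook_le_fst (hhook : ∀ h ∈ H, IsHook w h)
    (hdescent : ∀ d, IsDescent w d → ∃ h ∈ H, h.1 = d)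
    (hsmall : ∀ h ∈ H, ∃ h' ∈ H, h'.2 = h.2 ∧ h'.2 = h'.1 + 1)
    (hi : 1 ≤ i) (hij : i < j) (hj : j ≤ w.length) (hle : entry w j ≤ entry w i) :
    ∃ h ∈ H, i ≤ h.1 ∧ seesHook w h j := by
  by_cases hend : ∃ h ∈ H, h.2 = j
  · obtain ⟨h, hh, rfl⟩ := hend
    obtain ⟨s, hs, hsh, hs_small⟩ := hsmall h hh
    exact ⟨s, hs, by omega, Or.inr hsh.symm⟩
  · obtain ⟨d, ⟨hid, hdj⟩, hd, hjd, hlt⟩ := exists_isDescent_forall_Ioo_lt hi hij hj hle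
    obtain ⟨h, hh, rfl⟩ := hdescent d hd
    obtain ⟨-, hh_lt, -, hh_le⟩ := hhook h hh
    have hj_le : entry w j ≤ entry w h.2 := hjd.trans hh_le
    have hj_lt : j < h.2 := by
      by_contra! h_le
      have h_lt : h.2 < j := h_le.lt_of_ne fun heq => hend ⟨h, hh, heq⟩
      exact (hlt h.2 ⟨hh_lt, h_lt⟩).not_ge hj_le
    exact ⟨h, hh, hid, Or.inl ⟨hdj, hj_lt, hj_le⟩⟩

theorem seesHook.fst_lt {h : ℕ × ℕ} {a : ℕ} (hsees : seesHook w h a) (hh : h.1 < h.2) :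
    h.1 < a := by
  obtain ⟨hlt, -, -⟩ | rfl := hsees
  · exact hlt
  · exact hh

theorem lt_colorOf_iff {a u : ℕ} :
    u < colorOf w H a ↔ ∃ v, ∃ hv : v < H.length, u ≤ v ∧ seesHook w H[v] a := by
  simp only [colorOf, Finset.lt_sup_iff, Finset.mem_filter, Finset.mem_range, Nat.lt_succ_iff]
  constructor
  · rintro ⟨v, ⟨hv, hsees⟩, huv⟩
    exact ⟨v, hv, huv, by rwa [List.getD_eq_getElem _ _ hv] at hsees⟩
  · rintro ⟨v, hv, huv, hsees⟩
    exact ⟨v, ⟨hv, by rwa [List.getD_eq_getElem _ _ hv]⟩, huv⟩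

theorem colorOf_le_of_le_fst (hlt : ∀ h ∈ H, h.1 < h.2) (hsorted : (H.map Prod.fst).SortedLE)
    {a u : ℕ} (hu : u < H.length) (ha : a ≤ H[u].1) : colorOf w H a ≤ u := by
  by_contra! hcolor
  obtain ⟨v, hv, huv, hsees⟩ := lt_colorOf_iff.1 hcolor
  have hfst_le : H[u].1 ≤ H[v].1 := by
    have hmap := hsorted.getElem_le_getElem_of_le (hi := by simpa) (hj := by simpa) huv
    rwa [List.getElem_map, List.getElem_map] at hmap
  have hfst_lt : H[v].1 < a := hsees.fst_lt (hlt _ (List.getElem_mem hv))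
  exact (ha.trans hfst_le).not_gt hfst_lt

theorem colors_increase_general (hhook : ∀ h ∈ H, IsHook w h)
    (hsorted : (H.map Prod.fst).SortedLE)
    (hdescent : ∀ d, IsDescent w d → ∃ h ∈ H, h.1 = d)
    (hsmall : ∀ h ∈ H, ∃ h' ∈ H, h'.2 = h.2 ∧ h'.2 = h'.1 + 1)
    (hi : 1 ≤ i) (hij : i < j) (hj : j ≤ w.length) (hcolor : colorOf w H j ≤ colorOf w H i) :
    entry w i < entry w j := by
  by_contra! hle
  obtain ⟨h, hh, hih, hsees⟩ := exists_seesHook_le_fst hhook hdescent hsmall hi hij hj hle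
  obtain ⟨u, hu, rfl⟩ := List.getElem_of_mem hh
  have hi_le : colorOf w H i ≤ u :=
    colorOf_le_of_le_fst (fun h hh => (hhook h hh).2.1) hsorted hu hih
  have hj_gt : u < colorOf w H j := lt_colorOf_iff.2 ⟨u, hu, le_rfl, hsees⟩
  exact (hi_le.trans_lt hj_gt).not_ge hcolor

end

/-- Let `(H₁, …, H_k)` be a valid hook configuration of a word `w = w₁ ⋯ w_m`.
If the points `(i, w_i)` and `(j, w_j)` are given the same color in the induced
coloring of the plot of `w` and `i < j`, then `w_i < w_j`. -/
theorem colors_increase (w : List ℕ) (hw : 0 ∉ w) (H : List (ℕ × ℕ))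
    (hH : IsVHC w H) (i j : ℕ) (hi : 1 ≤ i) (hij : i < j) (hj : j ≤ w.length)
    (hcolor : colorOf w H i = colorOf w H j) :
    entry w i < entry w j := by
  obtain ⟨hhook, hsorted, hdescent, hends, -⟩ := hH
  exact colors_increase_general hhook hsorted.sortedLT.sortedLE hdescent
    (fun h hh => (hends h.2 ⟨h, hh, rfl⟩).2) hi hij hj hcolor.ge
end

section
/- For nonnegative integers c₁,…,c_n, let M(c₁,…,c_n) denote the number of words in W_{(c₁,…,c_n)} that avoid the pattern 231. Then M(c₁) = 1 for every nonnegative integer c₁, and for n ≥ 2: if c₂ ≥ 1, then M(c₁,…,c_n) = M(c₁+c₂, c₃,…,c_n) + Σ_{r=1}^{c₁} M(r, c₂−1, c₃,…,c_n), and if c₂ = 0, then M(c₁,…,c_n) = M(c₁, c₃,…,c_n). -/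
/-- Membership in `W_c`: `w` is a word over the positive integers with exactly
`cᵢ` copies of the letter `i` for each `1 ≤ i ≤ n = c.length` (and no other letters). -/
def InW (c : List ℕ) (w : List ℕ) : Prop :=
  0 ∉ w ∧ ∀ i : ℕ, w.count (i + 1) = c.getD i 0

/-- The identity word `Id_c = 1^{c₁} 2^{c₂} ⋯ n^{c_n}`, the unique word in `W_c`
whose letters are nondecreasing from left to right. -/
def idWord (c : List ℕ) : List ℕ :=
  ((List.range c.length).map fun i => List.replicate (c.getD i 0) (i + 1)).flatten

/-- `w` contains the pattern `231`: there are indices `a < b < c` with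
`w_c < w_a < w_b`. -/
def Contains231 (w : List ℕ) : Prop :=
  ∃ a b c : ℕ, a < b ∧ b < c ∧ c < w.length ∧
    w.getD c 0 < w.getD a 0 ∧ w.getD a 0 < w.getD b 0

/-- `w` contains the pattern `221`: there are indices `a < b < c` with
`w_c < w_a = w_b`. -/
def Contains221 (w : List ℕ) : Prop :=
  ∃ a b c : ℕ, a < b ∧ b < c ∧ c < w.length ∧
    w.getD c 0 < w.getD a 0 ∧ w.getD a 0 = w.getD b 0

/-- `M(c₁, …, c_n)`: the number of words in `W_{(c₁, …, c_n)}` avoiding the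
pattern `231`. -/
noncomputable def Mcount (c : List ℕ) : ℕ :=
  {w : List ℕ | InW c w ∧ ¬Contains231 w}.ncard

/-!
Split the words according to whether some `2` precedes some `1`.

If none does, identifying the letters `1` and `2` loses no information: the first `c₁` of the
merged letters must have been `1`s. This identification is a bijection onto the avoiders counted by
`M(c₁ + c₂, c₃, …, c_n)`.

Otherwise, look at the last `1` and the last `2` before it. A letter `z ≥ 3` between them would
form the pattern `2 z 1`, so only `1`s lie there. Deleting this block `2 1 ⋯ 1` in front of the
last `1` leaves an avoider with one `2` fewer and `r ≥ 1` copies of `1`. Reinserting the block,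
whose length is determined by `r`, creates no `231`: no letter lies strictly between `1` and `2`,
and every letter after the last `1` is at least `2`.
-/

open Finset

section Lists

variable {α : Type*}

lemma triplewise_iff_forall_sublist {p : α → α → α → Prop} {l : List α} :
    l.Triplewise p ↔ ∀ a b c, [a, b, c].Sublist l → p a b c := by
  induction l with
  | nil => simp
  | cons x l ih =>
    rw [List.triplewise_cons, List.pairwise_iff_forall_sublist, ih]
    constructor
    · rintro ⟨hx, hl⟩ a b c (_ | ⟨_, h⟩ | ⟨_, h⟩)
      · exact hl a b c ‹_›
      · exact hx ‹_›
    · intro h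
      exact ⟨fun hs => h _ _ _ (hs.cons_cons x), fun a b c hs => h a b c (hs.cons x)⟩

lemma exists_eq_append_cons_notMem {a : α} {l : List α} (h : a ∈ l) :
    ∃ u v, a ∉ v ∧ l = u ++ a :: v := by
  obtain ⟨v, u, hl, hv⟩ := List.eq_append_cons_of_mem (List.mem_reverse.2 h)
  exact ⟨u.reverse, v.reverse, by simpa using hv, by simpa using congrArg List.reverse hl⟩

lemma append_cons_inj_of_notMem_right {a : α} {u v u' v' : List α} (hv : a ∉ v) (hv' : a ∉ v') :
    u ++ a :: v = u' ++ a :: v' ↔ u = u' ∧ v = v' := by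
  rw [List.append_eq_append_iff]
  constructor
  · rintro (⟨t, rfl, ht⟩ | ⟨t, rfl, ht⟩) <;> cases t <;> simp_all
  · rintro ⟨rfl, rfl⟩
    simp

variable [DecidableEq α]

/-- `insertBeforeLast a s l` inserts the block `s` immediately before the last occurrence of `a`
in `l`. It is only meaningful when `a ∈ l`. -/
def insertBeforeLast (a : α) (s l : List α) : List α :=
  (l.rdropWhile (· ≠ a)).dropLast ++ s ++ a :: l.rtakeWhile (· ≠ a)

lemma insertBeforeLast_append_cons {a : α} {v : List α} (hv : a ∉ v) (s u : List α) :
    insertBeforeLast a s (u ++ a :: v) = u ++ s ++ a :: v := by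
  have hne : ∀ x ∈ v.reverse, (!decide (x = a)) = true := by
    simp only [List.mem_reverse, Bool.not_eq_true', decide_eq_false_iff_not]
    rintro x hx rfl
    exact hv hx
  simp [insertBeforeLast, List.rdropWhile, List.rtakeWhile, List.dropWhile_append_of_pos hne,
    List.takeWhile_append_of_pos hne]

lemma insertBeforeLast_perm {a : α} {l : List α} (ha : a ∈ l) (s : List α) :
    (insertBeforeLast a s l).Perm (s ++ l) := by
  obtain ⟨u, v, hv, rfl⟩ := exists_eq_append_cons_notMem ha
  rw [insertBeforeLast_append_cons hv, ← List.append_assoc]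
  exact List.perm_append_comm.append_right _

lemma sublist_insertBeforeLast (a b : α) (s l : List α) :
    [b, a].Sublist (insertBeforeLast a (b :: s) l) :=
  (List.singleton_sublist.2 (by simp)).append (List.singleton_sublist.2 (by simp))

lemma insertBeforeLast_cons_replicate_inj {a b : α} (hab : a ≠ b) {l l' : List α} (hl : a ∈ l)
    (hl' : a ∈ l') {j j' : ℕ} (h : insertBeforeLast a (b :: List.replicate j a) l =
      insertBeforeLast a (b :: List.replicate j' a) l') : l = l' := by
  obtain ⟨u, v, hv, rfl⟩ := exists_eq_append_cons_notMem hl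
  obtain ⟨u', v', hv', rfl⟩ := exists_eq_append_cons_notMem hl'
  have hb (k : ℕ) : b ∉ List.replicate k a := fun h => hab (List.eq_of_mem_replicate h).symm
  rw [insertBeforeLast_append_cons hv, insertBeforeLast_append_cons hv',
    append_cons_inj_of_notMem_right hv hv', append_cons_inj_of_notMem_right (hb j) (hb j')] at h
  rw [h.1.1, h.2]

end Lists

section Avoidance

variable {α β : Type*} [LinearOrder α] [LinearOrder β]

/-- Avoidance of the pattern `231`, for words over an arbitrary linearly ordered alphabet: for
letters `a`, `b`, `c` in this order, `c < a < b` never holds. -/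
def Avoids231 (w : List α) : Prop := w.Triplewise fun a b c => c < a → b ≤ a

lemma Avoids231.sublist {v w : List α} (hw : Avoids231 w) (h : v.Sublist w) : Avoids231 v :=
  triplewise_iff_forall_sublist.2 fun a b c hs =>
    triplewise_iff_forall_sublist.1 hw a b c (hs.trans h)

lemma not_contains231_iff {w : List ℕ} : ¬ Contains231 w ↔ Avoids231 w := by
  simp only [Contains231, Avoids231, List.triplewise_iff_getElem]
  constructor
  · intro h i j k hij hjk hk hlt
    by_contra! hgt
    exact h ⟨i, j, k, hij, hjk, hk, by grind, by grind⟩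
  · rintro h ⟨i, j, k, hij, hjk, hk, hki, hij'⟩
    grind [h i j k hij hjk hk]

lemma avoids231_replicate (n : ℕ) (a : α) : Avoids231 (List.replicate n a) := by
  simp [Avoids231, List.triplewise_iff_getElem]

lemma avoids231_map_iff {f : α → β} (hf : Monotone f) {x y : α} {w : List α}
    (hx : ∀ a ∈ w, x ≤ a) (hfw : ∀ a ∈ w, ∀ b ∈ w, a < b → f a = f b → a = x ∧ b = y)
    (hyx : ¬ [y, x].Sublist w) : Avoids231 (w.map f) ↔ Avoids231 w := by
  rw [Avoids231, List.triplewise_map]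
  simp only [Avoids231, triplewise_iff_forall_sublist]
  refine forall₄_congr fun a b c hs => ?_
  have ha : a ∈ w := hs.subset (by simp)
  have hb : b ∈ w := hs.subset (by simp)
  have hc : c ∈ w := hs.subset (by simp)
  have hca : f c < f a ↔ c < a := by
    refine ⟨hf.reflect_lt, fun h => (hf h.le).lt_of_ne fun he => ?_⟩
    obtain ⟨rfl, rfl⟩ := hfw c hc a ha h he
    exact hyx (.trans (by simp) hs)
  rw [hca]
  refine forall_congr' fun hlt => ⟨fun hba => ?_, fun hba => hf hba⟩
  by_contra! hab
  obtain ⟨rfl, -⟩ := hfw a ha b hb hab ((hf hab.le).antisymm hba)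
  exact (hx c hc).not_gt hlt

lemma avoids231_append_cons_self_cons_iff {x : α} {u v : List α} :
    Avoids231 (u ++ x :: x :: v) ↔ Avoids231 (u ++ x :: v) := by
  simp only [Avoids231, List.triplewise_append, List.triplewise_cons, List.pairwise_cons,
    List.forall_mem_cons]
  grind

lemma avoids231_append_replicate_append_cons_iff {x : α} {u v : List α} (j : ℕ) :
    Avoids231 (u ++ List.replicate j x ++ x :: v) ↔ Avoids231 (u ++ x :: v) := by
  induction j with
  | zero => simp
  | succ j ih =>
    rw [← ih, List.replicate_succ', ← List.append_assoc, List.append_assoc _ [x],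
      List.singleton_append, avoids231_append_cons_self_cons_iff]

lemma avoids231_append_cons_cons_iff {x y : α} (hxy : x ⋖ y) {u v : List α}
    (hv : ∀ z ∈ v, x < z) : Avoids231 (u ++ y :: x :: v) ↔ Avoids231 (u ++ x :: v) := by
  refine ⟨fun h => h.sublist (by simp), fun h => ?_⟩
  have hyv : ∀ z ∈ v, y ≤ z := fun z hz => hxy.ge_of_gt (hv z hz)
  simp only [Avoids231, List.triplewise_append, List.triplewise_cons, List.pairwise_cons,
    List.forall_mem_cons] at h ⊢
  obtain ⟨hu', ⟨hxv, hv'⟩, huv, hxu, hvu⟩ := h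
  refine ⟨hu', ⟨⟨?_, ?_⟩, hxv, hv'⟩, ?_, ?_, hxu, hvu⟩
  · intro c hc hcy
    exact absurd hcy (hyv c hc).not_gt
  · exact List.pairwise_of_forall_mem_list fun _ _ c hc hcy => absurd hcy (hyv c hc).not_gt
  · intro a ha
    refine ⟨⟨fun hxa => hxy.ge_of_gt hxa, fun c hc hca => hxy.ge_of_gt ?_⟩, huv a ha⟩
    exact (hv c hc).trans hca
  · exact hxu.imp fun h hya => h (hxy.lt.trans hya)

lemma Avoids231.exists_insertBeforeLast_eq {x y : α} (hxy : x ⋖ y) {w : List α}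
    (hw : Avoids231 w) (hx : ∀ a ∈ w, x ≤ a) (h : [y, x].Sublist w) :
    ∃ j l, x ∈ l ∧ insertBeforeLast x (y :: List.replicate j x) l = w := by
  obtain ⟨p, v, hv, rfl⟩ := exists_eq_append_cons_notMem (h.subset (by simp : x ∈ [y, x]))
  have hy : y ∈ p := by
    obtain ⟨_ | ⟨a, s⟩, t, hst, hs, ht⟩ := List.sublist_append_iff.1 h
    · obtain rfl : [y, x] = t := hst
      have hyx : [y, x].Sublist v := by simpa [List.sublist_cons_iff, hxy.ne'] using ht
      exact absurd (hyx.subset (by simp)) hv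
    · obtain rfl : y = a := (List.cons.inj hst).1
      exact hs.subset (by simp)
  obtain ⟨u, q, hq, rfl⟩ := exists_eq_append_cons_notMem hy
  have hqx : ∀ z ∈ q, z = x := by
    intro z hz
    have hyzx : [y, z, x].Sublist (u ++ y :: q ++ x :: v) :=
      ((List.singleton_sublist.2 hz).cons_cons y).trans (List.sublist_append_right u _)
        |>.append (by simp : [x].Sublist (x :: v))
    have hzy : z ≤ y := triplewise_iff_forall_sublist.1 hw y z x hyzx hxy.lt
    have hne : z ≠ y := fun h => hq (h ▸ hz)
    exact (hxy.le_of_lt (hzy.lt_of_ne hne)).antisymm (hx z (by simp [hz]))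
  refine ⟨q.length, u ++ x :: v, by simp, ?_⟩
  rw [insertBeforeLast_append_cons hv, ← List.eq_replicate_of_mem hqx]

end Avoidance

section Words

lemma one_le_of_zero_notMem {w : List ℕ} (h0 : 0 ∉ w) : ∀ k ∈ w, 1 ≤ k := fun _ hk =>
  Nat.one_le_iff_ne_zero.2 (ne_of_mem_of_not_mem hk h0)

lemma inW_cons {a : ℕ} {cs w : List ℕ} :
    InW (a :: cs) w ↔ 0 ∉ w ∧ w.count 1 = a ∧ ∀ i, w.count (i + 2) = cs.getD i 0 := by
  simp [InW, ← Nat.and_forall_add_one (p := fun i => w.count (i + 1) = _)]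

lemma inW_cons_cons {a b : ℕ} {cs w : List ℕ} : InW (a :: b :: cs) w ↔
    0 ∉ w ∧ w.count 1 = a ∧ w.count 2 = b ∧ ∀ i, w.count (i + 3) = cs.getD i 0 := by
  simp [inW_cons (cs := b :: cs), ← Nat.and_forall_add_one (p := fun i => w.count (i + 2) = _)]

lemma InW.perm {c v w : List ℕ} (hv : InW c v) (hw : InW c w) : v.Perm w := by
  rw [List.perm_iff_count]
  rintro (_ | i)
  · rw [List.count_eq_zero_of_not_mem hv.1, List.count_eq_zero_of_not_mem hw.1]
  · rw [hv.2, hw.2]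

lemma finite_setOf_inW (c : List ℕ) : {w | InW c w}.Finite := by
  obtain h | ⟨w, hw⟩ := {w | InW c w}.eq_empty_or_nonempty
  · simp [h]
  · exact w.permutations.toFinset.finite_toSet.subset fun v hv => by simpa using InW.perm hv hw

/-- The words counted by `Mcount c`, as a finset, so that the count becomes a cardinality. -/
noncomputable def avoiders (c : List ℕ) : Finset (List ℕ) :=
  ((finite_setOf_inW c).subset (Set.sep_subset _ Avoids231)).toFinset

lemma mem_avoiders {c w : List ℕ} : w ∈ avoiders c ↔ InW c w ∧ Avoids231 w := by
  simp [avoiders]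

lemma card_avoiders (c : List ℕ) : #(avoiders c) = Mcount c := by
  rw [Mcount, ← Set.ncard_coe_finset]
  congr with w
  simp [mem_avoiders, not_contains231_iff]

lemma avoiders_singleton (n : ℕ) : avoiders [n] = {List.replicate n 1} := by
  have hn : InW [n] (List.replicate n 1) := by simp [inW_cons, List.count_replicate]
  ext w
  rw [mem_avoiders, mem_singleton]
  constructor
  · intro hw
    exact List.perm_replicate.1 (hw.1.perm hn)
  · rintro rfl
    exact ⟨hn, avoids231_replicate n 1⟩

/-- The relabelling of letters that identifies `1` and `2` and shifts the larger letters down by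
one. The value at `0` is irrelevant, since `0` is not a letter. -/
def mergeOneTwo (k : ℕ) : ℕ := max 1 (k - 1)

lemma monotone_mergeOneTwo : Monotone mergeOneTwo := fun a b h => by
  simp only [mergeOneTwo]
  lia

lemma avoids231_map_mergeOneTwo_iff {w : List ℕ} (h0 : 0 ∉ w) (h : ¬ [2, 1].Sublist w) :
    Avoids231 (w.map mergeOneTwo) ↔ Avoids231 w := by
  have hpos := one_le_of_zero_notMem h0
  refine avoids231_map_iff monotone_mergeOneTwo hpos (fun a ha b _ hab he => ?_) h
  have := hpos a ha
  simp only [mergeOneTwo] at he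
  lia

lemma count_one_map_mergeOneTwo {w : List ℕ} (h0 : 0 ∉ w) :
    (w.map mergeOneTwo).count 1 = w.count 1 + w.count 2 := by
  induction w with
  | nil => rfl
  | cons x w ih => grind [mergeOneTwo]

lemma count_add_two_map_mergeOneTwo (w : List ℕ) (i : ℕ) :
    (w.map mergeOneTwo).count (i + 2) = w.count (i + 3) := by
  induction w with
  | nil => rfl
  | cons x w ih => grind [mergeOneTwo]

lemma inW_map_mergeOneTwo_iff {a b : ℕ} {cs w : List ℕ} (h0 : 0 ∉ w) (ha : w.count 1 = a) :
    InW ((a + b) :: cs) (w.map mergeOneTwo) ↔ InW (a :: b :: cs) w := by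
  have hzero : 0 ∉ w.map mergeOneTwo := by simp [mergeOneTwo]
  rw [inW_cons, inW_cons_cons, count_one_map_mergeOneTwo h0]
  simp [hzero, count_add_two_map_mergeOneTwo, h0, ha]

lemma map_mergeOneTwo_inj {v w : List ℕ} (hv0 : 0 ∉ v) (hw0 : 0 ∉ w) (hv : ¬ [2, 1].Sublist v)
    (hw : ¬ [2, 1].Sublist w) (hcount : v.count 1 = w.count 1)
    (h : v.map mergeOneTwo = w.map mergeOneTwo) : v = w := by
  induction v generalizing w with
  | nil => simp_all
  | cons x v ih =>
    obtain _ | ⟨y, w⟩ := w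
    · simp at h
    · simp only [List.cons_sublist_cons', List.singleton_sublist, not_or, not_and] at hv hw
      obtain ⟨hxy, hvw⟩ :
          mergeOneTwo x = mergeOneTwo y ∧ v.map mergeOneTwo = w.map mergeOneTwo := by simpa using h
      have hcases : x = y ∨ x = 1 ∧ y = 2 ∨ x = 2 ∧ y = 1 := by
        simp only [mergeOneTwo] at hxy
        grind
      have hone (u : List ℕ) : 1 ∈ u ↔ 0 < u.count 1 := List.count_pos_iff.symm
      obtain rfl : x = y := by
        obtain h | ⟨rfl, rfl⟩ | ⟨rfl, rfl⟩ := hcases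
        · exact h
        · have hcount' : v.count 1 + 1 = w.count 1 := by simpa using hcount
          exact absurd ((hone w).2 (by lia)) (hw.2 rfl)
        · have hcount' : v.count 1 = w.count 1 + 1 := by simpa using hcount
          exact absurd ((hone v).2 (by lia)) (hv.2 rfl)
      simp only [List.count_cons, Nat.add_right_cancel_iff] at hcount
      rw [ih (by grind) (by grind) hv.1 hw.1 hcount hvw]

lemma exists_map_mergeOneTwo_eq {v : List ℕ} (h0 : 0 ∉ v) {k : ℕ} (hk : k ≤ v.count 1) :
    ∃ w, 0 ∉ w ∧ ¬ [2, 1].Sublist w ∧ w.count 1 = k ∧ w.map mergeOneTwo = v := by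
  induction v generalizing k with
  | nil => exact ⟨[], by simp_all⟩
  | cons x v ih =>
    obtain ⟨hx0, hv0⟩ : x ≠ 0 ∧ 0 ∉ v := by simpa [eq_comm] using h0
    obtain rfl | hx1 := eq_or_ne x 1
    · obtain _ | k := k
      · obtain ⟨w, hw0, -, hcount, rfl⟩ := ih hv0 (Nat.zero_le _)
        have h1 : 1 ∉ w := List.count_eq_zero.1 hcount
        exact ⟨2 :: w, by simpa, by simpa, by simpa, by simp [mergeOneTwo]⟩
      · obtain ⟨w, hw0, hw, hcount, rfl⟩ := ih hv0 (k := k) (by simpa using hk)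
        exact ⟨1 :: w, by simpa, by simpa [List.cons_sublist_cons'], by simpa,
          by simp [mergeOneTwo]⟩
    · obtain ⟨w, hw0, hw, hcount, rfl⟩ := ih hv0 (k := k) (by simpa [hx1] using hk)
      have hmerge : mergeOneTwo (x + 1) = x := max_eq_right (Nat.one_le_iff_ne_zero.2 hx0)
      exact ⟨(x + 1) :: w, by simpa, by simp [List.cons_sublist_cons', hw, hx1], by simpa [hx0],
        by rw [List.map_cons, hmerge]⟩

lemma card_filter_not_sublist (a b : ℕ) (cs : List ℕ) :
    #{w ∈ avoiders (a :: b :: cs) | ¬ [2, 1].Sublist w} = Mcount ((a + b) :: cs) := by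
  rw [← card_avoiders]
  refine card_nbij (List.map mergeOneTwo) ?_ ?_ ?_
  · intro w hw
    simp only [coe_filter, Set.mem_ofPred_eq, mem_avoiders] at hw
    obtain ⟨⟨hW, hav⟩, h21⟩ := hw
    obtain ⟨h0, hcount, -⟩ := inW_cons.1 hW
    exact mem_avoiders.2 ⟨(inW_map_mergeOneTwo_iff h0 hcount).2 hW,
      (avoids231_map_mergeOneTwo_iff h0 h21).2 hav⟩
  · intro v hv w hw h
    simp only [coe_filter, Set.mem_ofPred_eq, mem_avoiders] at hv hw
    obtain ⟨hv0, hvcount, -⟩ := inW_cons.1 hv.1.1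
    obtain ⟨hw0, hwcount, -⟩ := inW_cons.1 hw.1.1
    exact map_mergeOneTwo_inj hv0 hw0 hv.2 hw.2 (hvcount.trans hwcount.symm) h
  · intro v hv
    obtain ⟨hW, hav⟩ := mem_avoiders.1 hv
    obtain ⟨h0, hcount, -⟩ := inW_cons.1 hW
    obtain ⟨w, hw0, h21, hwcount, rfl⟩ :=
      exists_map_mergeOneTwo_eq h0 (hcount ▸ Nat.le_add_right a b)
    refine ⟨w, ?_, rfl⟩
    simp only [coe_filter, Set.mem_ofPred_eq, mem_avoiders]
    exact ⟨⟨(inW_map_mergeOneTwo_iff hw0 hwcount).1 hW,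
      (avoids231_map_mergeOneTwo_iff hw0 h21).1 hav⟩, h21⟩

lemma inW_insertBeforeLast_iff {a b r : ℕ} {cs w : List ℕ} (hr : r ≤ a) (h1 : 1 ∈ w)
    (hw : w.count 1 = r) : InW (a :: (b + 1) :: cs)
      (insertBeforeLast 1 (2 :: List.replicate (a - r) 1) w) ↔ InW (r :: b :: cs) w := by
  have hperm := insertBeforeLast_perm h1 (2 :: List.replicate (a - r) 1)
  simp only [inW_cons_cons, hperm.mem_iff, hperm.count_eq]
  simp [List.count_replicate, hw, hr]

lemma avoids231_insertBeforeLast_iff {w : List ℕ} (h0 : 0 ∉ w) (h1 : 1 ∈ w) (j : ℕ) :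
    Avoids231 (insertBeforeLast 1 (2 :: List.replicate j 1) w) ↔ Avoids231 w := by
  obtain ⟨u, v, hv, rfl⟩ := exists_eq_append_cons_notMem h1
  have hv' : ∀ z ∈ v, 1 < z := fun z hz =>
    (one_le_of_zero_notMem h0 z (by simp [hz])).lt_of_ne' (ne_of_mem_of_not_mem hz hv)
  rw [insertBeforeLast_append_cons hv, List.append_cons u 2,
    avoids231_append_replicate_append_cons_iff, List.append_assoc, List.singleton_append,
    avoids231_append_cons_cons_iff (y := 2) (Order.covBy_add_one 1) hv']

lemma card_filter_sublist (a b : ℕ) (cs : List ℕ) :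
    #{w ∈ avoiders (a :: (b + 1) :: cs) | [2, 1].Sublist w} =
      ∑ r ∈ Icc 1 a, Mcount (r :: b :: cs) := by
  simp_rw [← card_avoiders, ← card_sigma]
  symm
  refine card_nbij (fun p => insertBeforeLast 1 (2 :: List.replicate (a - p.1) 1) p.2) ?_ ?_ ?_
  · rintro ⟨r, w⟩ hp
    simp only [coe_sigma, Set.mem_sigma_iff, mem_coe, mem_Icc, mem_avoiders] at hp
    obtain ⟨⟨hr, hra⟩, hW, hav⟩ := hp
    obtain ⟨h0, hcount, -⟩ := inW_cons.1 hW
    have h1 : 1 ∈ w := List.count_pos_iff.1 (hcount ▸ hr)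
    simp only [coe_filter, Set.mem_ofPred_eq, mem_avoiders]
    exact ⟨⟨(inW_insertBeforeLast_iff hra h1 hcount).2 hW,
      (avoids231_insertBeforeLast_iff h0 h1 _).2 hav⟩, sublist_insertBeforeLast 1 2 _ _⟩
  · rintro ⟨r, v⟩ hv ⟨s, w⟩ hw h
    simp only [coe_sigma, Set.mem_sigma_iff, mem_coe, mem_Icc, mem_avoiders] at hv hw
    obtain ⟨-, hvcount, -⟩ := inW_cons.1 hv.2.1
    obtain ⟨-, hwcount, -⟩ := inW_cons.1 hw.2.1
    obtain rfl := insertBeforeLast_cons_replicate_inj (by decide)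
      (List.count_pos_iff.1 (hvcount ▸ hv.1.1)) (List.count_pos_iff.1 (hwcount ▸ hw.1.1)) h
    obtain rfl : r = s := hvcount.symm.trans hwcount
    rfl
  · intro w hw
    simp only [coe_filter, Set.mem_ofPred_eq, mem_avoiders] at hw
    obtain ⟨⟨hW, hav⟩, h21⟩ := hw
    obtain ⟨h0, hcount, -⟩ := inW_cons.1 hW
    obtain ⟨j, l, h1, rfl⟩ := hav.exists_insertBeforeLast_eq (y := 2) (Order.covBy_add_one 1)
      (one_le_of_zero_notMem h0) h21
    have hperm := insertBeforeLast_perm h1 (2 :: List.replicate j 1)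
    have hl : 1 ≤ l.count 1 := List.count_pos_iff.2 h1
    have hja : j + l.count 1 = a := by simpa [hperm.count_eq] using hcount
    obtain rfl : j = a - l.count 1 := by lia
    have hla : l.count 1 ≤ a := by lia
    have hl0 : 0 ∉ l := fun h => h0 (hperm.mem_iff.2 (by simp [h]))
    refine ⟨⟨l.count 1, l⟩, ?_, rfl⟩
    simp only [coe_sigma, Set.mem_sigma_iff, mem_coe, mem_Icc, mem_avoiders]
    exact ⟨⟨hl, hla⟩, (inW_insertBeforeLast_iff hla h1 rfl).1 hW,
      (avoids231_insertBeforeLast_iff hl0 h1 _).1 hav⟩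

end Words

/-- `M(c₁) = 1`, and for `n ≥ 2`: if `c₂ ≥ 1` then
`M(c₁, …, c_n) = M(c₁ + c₂, c₃, …, c_n) + ∑_{r=1}^{c₁} M(r, c₂ - 1, c₃, …, c_n)`,
and if `c₂ = 0` then `M(c₁, …, c_n) = M(c₁, c₃, …, c_n)`. -/
theorem Mcount_recurrence :
    (∀ c₁ : ℕ, Mcount [c₁] = 1) ∧
    (∀ (c₁ c₂ : ℕ) (cs : List ℕ),
      (1 ≤ c₂ → Mcount (c₁ :: c₂ :: cs) =
        Mcount ((c₁ + c₂) :: cs) +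
          ∑ r ∈ Finset.Icc 1 c₁, Mcount (r :: (c₂ - 1) :: cs)) ∧
      (c₂ = 0 → Mcount (c₁ :: c₂ :: cs) = Mcount (c₁ :: cs))) := by
  refine ⟨fun c₁ => ?_, fun c₁ c₂ cs => ⟨fun hc₂ => ?_, ?_⟩⟩
  · rw [← card_avoiders, avoiders_singleton, card_singleton]
  · obtain ⟨b, rfl⟩ := Nat.exists_eq_add_of_le' hc₂
    rw [Nat.add_sub_cancel, ← card_filter_not_sublist, ← card_filter_sublist, ← card_avoiders,
      add_comm #(filter _ _), card_filter_add_card_filter_not]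
  · rintro rfl
    have no_two : ∀ w ∈ avoiders (c₁ :: 0 :: cs), ¬ [2, 1].Sublist w := fun w hw hs =>
      List.count_eq_zero.1 (inW_cons_cons.1 (mem_avoiders.1 hw).1).2.2.1 (hs.subset (by simp))
    rw [← card_avoiders, ← filter_true_of_mem no_two, card_filter_not_sublist, add_zero]
end

section
/- For all positive integers ℓ and n, the number of words in W_{(ℓ,ℓ,…,ℓ)} (with n entries all equal to ℓ, i.e., ℓ-uniform words on the alphabet {1,…,n}) that avoid both of the patterns 231 and 221 equals the (ℓ+1)-Catalan number (1/(ℓn+1))·binom((ℓ+1)n, n). -/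
/-!
In an avoiding word whose largest letter `M` occurs `m + 1` times, nothing smaller than `M` can
follow the second `M` (pattern `221`), so the word is `u M v Mᵐ` with `u v` avoiding; and avoiding
`231` means that every letter of `u` is at most every letter of `v`, i.e. that the first `M` sits
at a "cut" of `u v`. If this is the `i`-th cut of `u v`, then `u M v Mᵐ` has exactly `i + m + 1`
cuts. Hence the avoiding words with multiplicities `ℓ` form a generating tree in which a node
labelled `k` has children labelled `ℓ + 1, …, ℓ + k`, and the numbers of descendants satisfy the
recursion of the Raney numbers.
-/

open Finset

section FinsetRank

variable {α M : Type*} [LinearOrder α] [AddCommMonoid M]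

theorem sum_comp_card_filter_le (s : Finset α) (f : ℕ → M) :
    ∑ p ∈ s, f #{q ∈ s | q ≤ p} = ∑ i ∈ range #s, f (i + 1) := by
  induction s using Finset.induction_on_max with
  | empty => simp
  | insert a s ha ih =>
    have ha' : a ∉ s := fun h ↦ (ha a h).false
    have top : ({q ∈ insert a s | q ≤ a} : Finset α) = insert a s :=
      filter_true_of_mem fun q hq ↦ by
        rcases mem_insert.1 hq with rfl | hq
        exacts [le_rfl, (ha q hq).le]
    have rest : ∀ p ∈ s, ({q ∈ insert a s | q ≤ p} : Finset α) = {q ∈ s | q ≤ p} :=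
      fun p hp ↦ by rw [filter_insert, if_neg (ha p hp).not_ge]
    rw [sum_insert ha', top, card_insert_of_notMem ha', sum_range_succ, add_comm, ← ih]
    congr 1
    exact sum_congr rfl fun p hp ↦ by rw [rest p hp]

end FinsetRank

section IdWord

theorem idWord_append_singleton (c : List ℕ) (m : ℕ) :
    idWord (c ++ [m]) = idWord c ++ List.replicate m (c.length + 1) := by
  have map_init : (List.range c.length).map
      (fun i ↦ List.replicate ((c ++ [m]).getD i 0) (i + 1)) =
      (List.range c.length).map fun i ↦ List.replicate (c.getD i 0) (i + 1) :=
    List.map_congr_left fun i hi ↦ by rw [List.getD_append _ _ _ _ (List.mem_range.1 hi)]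
  simp only [idWord, List.length_append, List.length_singleton, List.range_succ, List.map_append,
    List.flatten_append, map_init]
  simp

theorem mem_idWord_bounds {c : List ℕ} {x : ℕ} (hx : x ∈ idWord c) : 0 < x ∧ x ≤ c.length := by
  simp only [idWord, List.mem_flatten, List.mem_map, List.mem_range] at hx
  obtain ⟨_, ⟨i, hi, rfl⟩, hx⟩ := hx
  obtain rfl := List.eq_of_mem_replicate hx
  omega

theorem count_succ_idWord (c : List ℕ) (i : ℕ) : (idWord c).count (i + 1) = c.getD i 0 := by
  induction c using List.reverseRecOn with
  | nil => simp [idWord]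
  | append_singleton c m ih =>
    rw [idWord_append_singleton, List.count_append, ih, List.count_replicate]
    rcases lt_or_ge i c.length with hi | hi
    · rw [List.getD_append _ _ _ _ hi]
      simp [hi.ne']
    · rw [List.getD_eq_default _ _ hi, List.getD_append_right _ _ _ _ hi]
      rcases hi.eq_or_lt with rfl | hi
      · simp
      · rw [List.getD_eq_default _ _ (by rw [List.length_singleton]; omega)]
        simp [hi.ne]

theorem inW_iff_perm_idWord (c w : List ℕ) : InW c w ↔ w.Perm (idWord c) := by
  have zero : (idWord c).count 0 = 0 :=
    List.count_eq_zero.2 fun h ↦ (mem_idWord_bounds h).1.false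
  rw [List.perm_iff_count, InW, ← List.count_eq_zero]
  refine ⟨fun ⟨h0, h⟩ x ↦ ?_, fun h ↦ ⟨(h 0).trans zero, fun i ↦ ?_⟩⟩
  · cases x with
    | zero => rw [h0, zero]
    | succ i => rw [h, count_succ_idWord]
  · rw [h, count_succ_idWord]

end IdWord

section Avoidance

variable {α : Type*} [LinearOrder α] {M : α} {u v w : List α}

/-- Simultaneous avoidance of `231` and `221`, in positive form: once a letter `x` has been
followed by a letter `≥ x`, all later letters are `≥ x`. -/
def AvoidsBoth (w : List α) : Prop := w.Triplewise fun x y z ↦ x ≤ y → x ≤ z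

theorem avoidsBoth_iff_not_contains (w : List ℕ) :
    AvoidsBoth w ↔ ¬Contains231 w ∧ ¬Contains221 w := by
  rw [AvoidsBoth, List.triplewise_iff_getElem, Contains231, Contains221]
  constructor
  · refine fun h ↦ ⟨?_, ?_⟩ <;> rintro ⟨a, b, c, hab, hbc, hc, hca, hab'⟩ <;>
    · have := h a b c hab hbc hc
      grind
  · rintro ⟨h231, h221⟩ a b c hab hbc hc hle
    by_contra! hlt
    rcases hle.lt_or_eq with hlt' | heq
    · exact h231 ⟨a, b, c, hab, hbc, hc, by grind⟩
    · exact h221 ⟨a, b, c, hab, hbc, hc, by grind⟩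

theorem avoidsBoth_append_replicate_iff (hM : ∀ x ∈ w, x ≤ M) (m : ℕ) :
    AvoidsBoth (w ++ List.replicate m M) ↔ AvoidsBoth w := by
  refine ⟨fun h ↦ (List.triplewise_append.1 h).1, fun h ↦ List.triplewise_append.2 ⟨h, ?_, ?_, ?_⟩⟩
  · simp [List.triplewise_iff_getElem]
  · intro x hx
    simp [hM x hx]
  · intro z hz
    obtain rfl := List.eq_of_mem_replicate hz
    exact List.pairwise_of_forall_mem_list fun x hx _ _ _ ↦ hM x hx

theorem avoidsBoth_append_cons_iff (hu : ∀ x ∈ u, x ≤ M) (hv : ∀ x ∈ v, x < M) :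
    AvoidsBoth (u ++ M :: v) ↔ AvoidsBoth (u ++ v) ∧ ∀ a ∈ u, ∀ b ∈ v, a ≤ b := by
  have afterTop : v.Pairwise fun y z ↦ M ≤ y → M ≤ z :=
    List.pairwise_of_forall_mem_list fun y hy _ _ hMy ↦ absurd (hv y hy) hMy.not_gt
  have beforeTop : u.Pairwise fun x y ↦ x ≤ y → x ≤ M :=
    List.pairwise_of_forall_mem_list fun x hx _ _ _ ↦ hu x hx
  simp only [AvoidsBoth, List.triplewise_append, List.triplewise_cons, List.pairwise_cons,
    List.forall_mem_cons, afterTop, beforeTop, true_and]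
  constructor
  · rintro ⟨hu', hv', hpair, htriple⟩
    exact ⟨⟨hu', hv', fun a ha ↦ (hpair a ha).2, htriple⟩,
      fun a ha b hb ↦ (hpair a ha).1 b hb (hu a ha)⟩
  · rintro ⟨⟨hu', hv', hpair, htriple⟩, hcut⟩
    exact ⟨hu', hv', fun a ha ↦ ⟨fun b hb _ ↦ hcut a ha b hb, hpair a ha⟩, htriple⟩

theorem eq_filter_ne_append_replicate (hM : ∀ x ∈ w, x ≤ M)
    (h : w.Pairwise fun y z ↦ M ≤ y → M ≤ z) :
    w = w.filter (· ≠ M) ++ List.replicate (w.count M) M := by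
  induction w with
  | nil => simp
  | cons x t ih =>
    obtain ⟨hx, ht⟩ := List.pairwise_cons.1 h
    by_cases hxM : x = M
    · subst hxM
      have ht_top : ∀ y ∈ t, y = x := fun y hy ↦ (hM y (.tail _ hy)).antisymm (hx y hy le_rfl)
      rw [List.eq_replicate_of_mem ht_top]
      simp [List.replicate_succ]
    · rw [List.filter_cons_of_pos (by simpa), List.count_cons_of_ne hxM, List.cons_append,
        ← ih (fun y hy ↦ hM y (.tail _ hy)) ht]

theorem AvoidsBoth.exists_eq_append_cons {m : ℕ} (hw : AvoidsBoth w) (hM : ∀ x ∈ w, x ≤ M)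
    (hcount : w.count M = m + 1) :
    ∃ u v : List α, w = u ++ M :: v ++ List.replicate m M := by
  have hMw : M ∈ w := List.count_pos_iff.1 (by omega)
  obtain ⟨u, t, rfl, hu⟩ := List.eq_append_cons_of_mem hMw
  have htail : t.Pairwise fun y z ↦ M ≤ y → M ≤ z :=
    (List.triplewise_cons.1 (List.triplewise_append.1 hw).2.1).1
  have hcount_t : t.count M = m := by simpa [List.count_eq_zero.2 hu] using hcount
  refine ⟨u, t.filter (· ≠ M), ?_⟩
  rw [List.append_assoc, List.cons_append, ← hcount_t,
    ← eq_filter_ne_append_replicate (fun x hx ↦ hM x (by simp [hx])) htail]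

end Avoidance

section Cuts

variable {α : Type*} [LinearOrder α] {M : α} {u v w : List α} {p q : ℕ}

/-- The cuts of `w`: positions `p` such that each of the first `p` letters is at most each of the
remaining ones. Both ends `0` and `w.length` are cuts. -/
def cuts (w : List α) : Finset ℕ :=
  {p ∈ range (w.length + 1) | ∀ a ∈ w.take p, ∀ b ∈ w.drop p, a ≤ b}

theorem mem_cuts : p ∈ cuts w ↔ p ≤ w.length ∧ ∀ a ∈ w.take p, ∀ b ∈ w.drop p, a ≤ b := by
  simp [cuts]

theorem length_mem_cuts_append : u.length ∈ cuts (u ++ v) ↔ ∀ a ∈ u, ∀ b ∈ v, a ≤ b := by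
  simp [mem_cuts]

theorem mem_cuts_append_of_le_length (hq : q ≤ u.length) :
    q ∈ cuts (u ++ v) ↔ q ∈ cuts u ∧ ∀ a ∈ u.take q, ∀ b ∈ v, a ≤ b := by
  have hq' : q ≤ u.length + v.length := by omega
  simp only [mem_cuts, List.length_append, hq, hq', List.take_append_of_le_length hq,
    List.drop_append_of_le_length hq, List.forall_mem_append, true_and, forall_and]

theorem cuts_append_replicate (hM : ∀ x ∈ w, x ≤ M) (m : ℕ) :
    cuts (w ++ List.replicate m M) = cuts w ∪ Icc (w.length + 1) (w.length + m) := by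
  ext q
  rw [mem_union, mem_Icc]
  rcases le_or_gt q w.length with hq | hq
  · have below : ∀ a ∈ w.take q, ∀ b ∈ List.replicate m M, a ≤ b := fun a ha b hb ↦
      List.eq_of_mem_replicate hb ▸ hM a (List.mem_of_mem_take ha)
    rw [mem_cuts_append_of_le_length hq, and_iff_left below, or_iff_left (by omega)]
  · have le_top : ∀ a ∈ w ++ List.replicate m M, a ≤ M := by
      simpa [or_imp, forall_and] using hM
    have hq' : q ∉ cuts w := fun h ↦ (mem_cuts.1 h).1.not_gt hq
    have above : ∀ a ∈ (w ++ List.replicate m M).take q,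
        ∀ b ∈ (w ++ List.replicate m M).drop q, a ≤ b := by
      intro a ha b hb
      rw [List.drop_append, List.drop_of_length_le hq.le, List.nil_append,
        List.drop_replicate] at hb
      exact List.eq_of_mem_replicate hb ▸ le_top a (List.mem_of_mem_take ha)
    rw [or_iff_right hq', mem_cuts, and_iff_left above, List.length_append,
      List.length_replicate]
    omega

theorem cuts_append_cons (hu : ∀ x ∈ u, x ≤ M) (hv : ∀ x ∈ v, x < M) :
    cuts (u ++ M :: v) = insert (u ++ M :: v).length {q ∈ cuts (u ++ v) | q ≤ u.length} := by
  ext q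
  rw [mem_insert, mem_filter]
  rcases le_or_gt q u.length with hq | hq
  · have le_top : ∀ a ∈ u.take q, a ≤ M := fun a ha ↦ hu a (List.mem_of_mem_take ha)
    have hne : q ≠ (u ++ M :: v).length := by grind
    simp only [mem_cuts_append_of_le_length hq, List.forall_mem_cons, hq, hne, and_true, false_or]
    grind
  · simp only [hq.not_ge, and_false, or_false, mem_cuts]
    constructor
    · rintro ⟨hle, hsep⟩
      by_contra hne
      have hqlt : q < (u ++ M :: v).length := by omega
      have hlast : (u ++ M :: v)[q] ∈ v := by grind
      have hMq : M ≤ (u ++ M :: v)[q] := by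
        refine hsep _ ?_ _ ?_
        · simp [List.take_append, List.take_cons (Nat.sub_pos_of_lt hq)]
        · rw [List.drop_eq_getElem_cons hqlt]; exact List.mem_cons_self
      exact (hv _ hlast).not_ge hMq
    · rintro rfl
      simp

end Cuts

section InsertTop

variable {α : Type*} {M : α} {w : List α} {m p : ℕ}

/-- The word `u M v Mᵐ`, where `w = u v` and `u` has length `p`. -/
def insertTop (M : α) (m p : ℕ) (w : List α) : List α :=
  w.take p ++ M :: w.drop p ++ List.replicate m M

theorem exists_eq_append_of_le_length (hp : p ≤ w.length) :
    ∃ u v : List α, w = u ++ v ∧ u.length = p :=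
  ⟨w.take p, w.drop p, by simp, by simp [hp]⟩

theorem insertTop_length_append (M : α) (m : ℕ) (u v : List α) :
    insertTop M m u.length (u ++ v) = u ++ M :: v ++ List.replicate m M := by
  simp [insertTop]

theorem insertTop_perm (M : α) (m p : ℕ) (w : List α) :
    (insertTop M m p w).Perm (w ++ List.replicate (m + 1) M) := by
  have move : (w.take p ++ M :: w.drop p).Perm (w ++ [M]) := by
    refine List.perm_middle.trans ?_
    rw [List.take_append_drop]
    exact (List.perm_append_singleton M w).symm
  simpa [insertTop, List.replicate_succ] using move.append_right (List.replicate m M)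

theorem insertTop_inj {q : ℕ} {w' : List α} (hw : M ∉ w) (hp : p ≤ w.length)
    (hq : q ≤ w'.length) (h : insertTop M m p w = insertTop M m q w') :
    w = w' ∧ p = q := by
  obtain ⟨u, v, rfl, rfl⟩ := exists_eq_append_of_le_length hp
  obtain ⟨u', v', rfl, rfl⟩ := exists_eq_append_of_le_length hq
  simp only [insertTop_length_append] at h
  have hmid : u ++ M :: v = u' ++ M :: v' := List.append_cancel_right h
  simp only [List.mem_append, not_or] at hw
  obtain ⟨rfl, rfl⟩ : u = u' ∧ v = v' := by
    simpa using (List.append_cons_inj_of_notMem hw.1 hw.2).1 hmid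
  exact ⟨rfl, rfl⟩

variable [LinearOrder α]

theorem avoidsBoth_insertTop_iff (hM : ∀ x ∈ w, x < M) (hp : p ≤ w.length) :
    AvoidsBoth (insertTop M m p w) ↔ AvoidsBoth w ∧ p ∈ cuts w := by
  obtain ⟨u, v, rfl, rfl⟩ := exists_eq_append_of_le_length hp
  rw [List.forall_mem_append] at hM
  obtain ⟨hu, hv⟩ := hM
  have hle : ∀ x ∈ u ++ M :: v, x ≤ M := by grind
  rw [insertTop_length_append, avoidsBoth_append_replicate_iff hle,
    avoidsBoth_append_cons_iff (fun x hx ↦ (hu x hx).le) hv, length_mem_cuts_append]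

theorem card_cuts_insertTop (hM : ∀ x ∈ w, x < M) (hp : p ≤ w.length) :
    #(cuts (insertTop M m p w)) = #{q ∈ cuts w | q ≤ p} + (m + 1) := by
  obtain ⟨u, v, rfl, rfl⟩ := exists_eq_append_of_le_length hp
  rw [List.forall_mem_append] at hM
  obtain ⟨hu, hv⟩ := hM
  have hle : ∀ x ∈ u ++ M :: v, x ≤ M := by grind
  have disj : Disjoint (cuts (u ++ M :: v))
      (Icc ((u ++ M :: v).length + 1) ((u ++ M :: v).length + m)) :=
    disjoint_left.2 fun q hq hq' ↦ by
      have := (mem_cuts.1 hq).1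
      have := (mem_Icc.1 hq').1
      omega
  have fresh : (u ++ M :: v).length ∉ {q ∈ cuts (u ++ v) | q ≤ u.length} := by simp
  rw [insertTop_length_append, cuts_append_replicate hle, card_union_of_disjoint disj,
    Nat.card_Icc, cuts_append_cons (fun x hx ↦ (hu x hx).le) hv,
    card_insert_of_notMem fresh]
  omega

theorem AvoidsBoth.exists_eq_insertTop (hw : AvoidsBoth w) (hM : ∀ x ∈ w, x ≤ M)
    (hcount : w.count M = m + 1) :
    ∃ w' : List α, ∃ p ≤ w'.length, w = insertTop M m p w' := by
  obtain ⟨u, v, rfl⟩ := hw.exists_eq_append_cons hM hcount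
  exact ⟨u ++ v, u.length, by simp, (insertTop_length_append M m u v).symm⟩

end InsertTop

section GeneratingTree

/-- The words in `W_c` that avoid both `231` and `221`. -/
noncomputable def avoidingWords (c : List ℕ) : Finset (List ℕ) :=
  open Classical in {w ∈ (idWord c).permutations.toFinset | AvoidsBoth w}

theorem mem_avoidingWords {c w : List ℕ} :
    w ∈ avoidingWords c ↔ w.Perm (idWord c) ∧ AvoidsBoth w := by
  simp [avoidingWords]

theorem coe_avoidingWords (c : List ℕ) :
    (avoidingWords c : Set (List ℕ)) = {w | InW c w ∧ ¬Contains231 w ∧ ¬Contains221 w} := by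
  ext w
  rw [mem_coe, mem_avoidingWords, Set.mem_ofPred_eq, inW_iff_perm_idWord,
    avoidsBoth_iff_not_contains]

theorem lt_of_mem_of_mem_avoidingWords {c w : List ℕ} (hw : w ∈ avoidingWords c) {x : ℕ}
    (hx : x ∈ w) : x < c.length + 1 :=
  Nat.lt_succ_of_le (mem_idWord_bounds ((mem_avoidingWords.1 hw).1.mem_iff.1 hx)).2

theorem mem_avoidingWords_append_singleton {c w : List ℕ} {m : ℕ} :
    w ∈ avoidingWords (c ++ [m + 1]) ↔
      ∃ w' ∈ avoidingWords c, ∃ p ∈ cuts w', insertTop (c.length + 1) m p w' = w := by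
  constructor
  · intro hw
    obtain ⟨hperm, hav⟩ := mem_avoidingWords.1 hw
    have hle : ∀ x ∈ w, x ≤ c.length + 1 := fun x hx ↦ by
      simpa using (mem_idWord_bounds (hperm.mem_iff.1 hx)).2
    have hcount : w.count (c.length + 1) = m + 1 := by
      rw [hperm.count_eq, count_succ_idWord]
      simp
    obtain ⟨w', p, hp, rfl⟩ := hav.exists_eq_insertTop hle hcount
    have hperm' : w'.Perm (idWord c) := by
      rw [idWord_append_singleton] at hperm
      exact (List.perm_append_right_iff _).1 ((insertTop_perm _ _ _ _).symm.trans hperm)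
    have hlt : ∀ x ∈ w', x < c.length + 1 := fun x hx ↦
      Nat.lt_succ_of_le (mem_idWord_bounds (hperm'.mem_iff.1 hx)).2
    obtain ⟨hav', hcut⟩ := (avoidsBoth_insertTop_iff hlt hp).1 hav
    exact ⟨w', mem_avoidingWords.2 ⟨hperm', hav'⟩, p, hcut, rfl⟩
  · rintro ⟨w', hw', p, hp, rfl⟩
    obtain ⟨hperm, hav⟩ := mem_avoidingWords.1 hw'
    have hlt := fun x ↦ lt_of_mem_of_mem_avoidingWords hw' (x := x)
    refine mem_avoidingWords.2
      ⟨?_, (avoidsBoth_insertTop_iff hlt (mem_cuts.1 hp).1).2 ⟨hav, hp⟩⟩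
    rw [idWord_append_singleton]
    exact (insertTop_perm _ _ _ _).trans (hperm.append_right _)

theorem sum_avoidingWords_append_singleton {A : Type*} [AddCommMonoid A] (c : List ℕ) (m : ℕ)
    (f : ℕ → A) :
    ∑ w ∈ avoidingWords (c ++ [m + 1]), f #(cuts w) =
      ∑ w ∈ avoidingWords c, ∑ i ∈ range #(cuts w), f (i + 1 + (m + 1)) := by
  have notMem : ∀ w ∈ avoidingWords c, c.length + 1 ∉ w := fun w hw h ↦
    (lt_of_mem_of_mem_avoidingWords hw h).false
  have marked : ∑ x ∈ (avoidingWords c).sigma cuts,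
      f #(cuts (insertTop (c.length + 1) m x.2 x.1)) =
      ∑ w ∈ avoidingWords (c ++ [m + 1]), f #(cuts w) := by
    refine sum_nbij (fun x ↦ insertTop (c.length + 1) m x.2 x.1) ?_ ?_ ?_ fun _ _ ↦ rfl
    · rintro ⟨w, p⟩ hx
      obtain ⟨hw, hp⟩ := mem_sigma.1 hx
      exact mem_avoidingWords_append_singleton.2 ⟨w, hw, p, hp, rfl⟩
    · rintro ⟨w, p⟩ hx ⟨w', p'⟩ hx' h
      obtain ⟨hw, hp⟩ := mem_sigma.1 hx
      obtain ⟨-, hp'⟩ := mem_sigma.1 hx'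
      obtain ⟨rfl, rfl⟩ := insertTop_inj (notMem w hw) (mem_cuts.1 hp).1 (mem_cuts.1 hp').1 h
      rfl
    · intro w hw
      obtain ⟨w', hw', p, hp, rfl⟩ := mem_avoidingWords_append_singleton.1 hw
      exact ⟨⟨w', p⟩, mem_sigma.2 ⟨hw', hp⟩, rfl⟩
  rw [← marked, sum_sigma]
  refine sum_congr rfl fun w hw ↦ ?_
  rw [← sum_comp_card_filter_le (cuts w) fun r ↦ f (r + (m + 1))]
  exact sum_congr rfl fun p hp ↦ by
    rw [card_cuts_insertTop (fun x ↦ lt_of_mem_of_mem_avoidingWords hw) (mem_cuts.1 hp).1]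

/-- The number of nodes `n` levels below a node labelled `k` in the generating tree where the
children of `k` are labelled `ell + 1, …, ell + k`. -/
def descendants (ell : ℕ) : ℕ → ℕ → ℕ
  | 0, _ => 1
  | n + 1, k => ∑ i ∈ range k, descendants ell n (i + 1 + ell)

theorem sum_descendants_avoidingWords (m n d : ℕ) :
    ∑ w ∈ avoidingWords (List.replicate n (m + 1)), descendants (m + 1) d #(cuts w) =
      descendants (m + 1) (n + d) 1 := by
  induction n generalizing d with
  | zero =>
    have root : avoidingWords [] = {[]} := by
      ext w
      simp +contextual [mem_avoidingWords, idWord, AvoidsBoth]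
    simp [root, cuts]
  | succ n ih =>
    rw [List.replicate_succ', sum_avoidingWords_append_singleton, Nat.add_right_comm n 1 d]
    exact ih (d + 1)

theorem card_avoidingWords_replicate (m n : ℕ) :
    #(avoidingWords (List.replicate n (m + 1))) = descendants (m + 1) n 1 := by
  simpa [descendants] using sum_descendants_avoidingWords m n 0

theorem descendants_succ_succ (ell n k : ℕ) :
    descendants ell (n + 1) (k + 1) =
      descendants ell (n + 1) k + descendants ell n (k + 1 + ell) := by
  simp only [descendants, sum_range_succ]

/- Raney's formula, with its denominator cleared. -/
theorem add_mul_descendants (ell n k : ℕ) :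
    (k + (ell + 1) * n) * descendants ell n k = k * (k + (ell + 1) * n).choose n := by
  induction n generalizing k with
  | zero => simp [descendants]
  | succ n ihn =>
    induction k with
    | zero => simp [descendants]
    | succ k ihk =>
      have hprev := ihn (k + 1 + ell)
      obtain ⟨N, hN⟩ : ∃ N, N = k + (ell + 1) * (n + 1) := ⟨_, rfl⟩
      have hN_succ : k + 1 + (ell + 1) * (n + 1) = N + 1 := by rw [hN]; ring
      have hN_prev : k + 1 + ell + (ell + 1) * n = N := by rw [hN]; ring
      have hN_ne : N ≠ 0 := by rw [hN]; positivity
      have hnN : n ≤ N := by rw [hN]; nlinarith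
      have absorb : N.choose (n + 1) * (n + 1) = N.choose n * (N - n) :=
        Nat.choose_succ_right_eq N n
      rw [← hN] at ihk
      rw [hN_prev] at hprev
      rw [hN_succ, descendants_succ_succ, Nat.choose_succ_succ]
      apply mul_left_cancel₀ hN_ne
      zify [hnN] at hN ihk hprev absorb ⊢
      linear_combination (N + 1 : ℤ) * (ihk + hprev) - (ell + 1 : ℤ) * absorb -
        (N.choose n + N.choose (n + 1) : ℤ) * hN

end GeneratingTree

/-- For all positive integers `ℓ` and `n`, the number of `ℓ`-uniform words on the
alphabet `{1, …, n}` that avoid the patterns `231` and `221` is the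
`(ℓ+1)`-Catalan number `(1 / (ℓn + 1)) * binom((ℓ+1)n, n)`. -/
theorem uniform_words_count (ell n : ℕ) (hell : 1 ≤ ell) (hn : 1 ≤ n) :
    (ell * n + 1) *
      {w : List ℕ | InW (List.replicate n ell) w ∧
        ¬Contains231 w ∧ ¬Contains221 w}.ncard =
    Nat.choose ((ell + 1) * n) n := by
  obtain ⟨m, rfl⟩ : ∃ m, ell = m + 1 := ⟨ell - 1, by omega⟩
  rw [← coe_avoidingWords, Set.ncard_coe_finset, card_avoidingWords_replicate]
  set N := (m + 1 + 1) * n with hN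
  have raney : (N + 1) * descendants (m + 1) n 1 = (N + 1).choose n := by
    simpa [add_comm, hN] using add_mul_descendants (m + 1) n 1
  have absorb : N.choose n * (N + 1) = (N + 1).choose n * ((m + 1) * n + 1) := by
    rw [Nat.choose_mul_succ_eq, show N = (m + 1) * n + n by rw [hN]; ring]
    congr 1
    omega
  apply mul_left_cancel₀ N.succ_ne_zero
  rw [Nat.succ_eq_add_one, mul_left_comm, raney, mul_comm, ← absorb, mul_comm]
end
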